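/- Let X ⊂ P^n be an irreducible hypersurface over ℂ of degree d, and let S ⊂ X be an irreducible subvariety with dim S ≥ d. Then through a general point p of X there passes a line contained in X meeting S; that is, the family of lines through points of S which are d-fold tangent to X at those points dominates X. -/

import Mathlib

open MvPolynomial

noncomputable section

/-- Complex projective `n`-space, as the projectivization of `ℂ^{n+1}`. -/
abbrev Pn (n : ℕ) := Projectivization ℂ (Fin (n + 1) → ℂ)

/-- The common zero locus in `ℙ^n` of a set of polynomials: the points all of whose
homogeneous representatives are zeros of every polynomial in the set. -/
def algZeroLocus (n : ℕ) (F : Set (MvPolynomial (Fin (n + 1)) ℂ)) : Set (Pn n) :=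
  {p | ∀ f ∈ F, ∀ v : Fin (n + 1) → ℂ, v ∈ Projectivization.submodule p → eval v f = 0}

/-- A subset of `ℙ^n` is (Zariski-)closed if it is the common zero locus of a set of
polynomials. -/
def IsAlgClosedSet (n : ℕ) (S : Set (Pn n)) : Prop :=
  ∃ F, S = algZeroLocus n F

/-- A subset of `ℙ^n` is an irreducible variety if it is nonempty and cannot be covered by
two closed sets without being contained in one of them. -/
def IsIrrVariety (n : ℕ) (S : Set (Pn n)) : Prop :=
  S.Nonempty ∧ ∀ C₁ C₂ : Set (Pn n), IsAlgClosedSet n C₁ → IsAlgClosedSet n C₂ →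
    S ⊆ C₁ ∪ C₂ → S ⊆ C₁ ∨ S ⊆ C₂

/-- The dimension of a subset of `ℙ^n`: the supremum of lengths of strictly increasing chains
of irreducible closed subvarieties contained in it. -/
def algDim (n : ℕ) (S : Set (Pn n)) : ℕ∞ :=
  sSup {m : ℕ∞ | ∃ k : ℕ, m = (k : ℕ∞) ∧ ∃ c : Fin (k + 1) → Set (Pn n),
    StrictMono c ∧ ∀ i, IsAlgClosedSet n (c i) ∧ IsIrrVariety n (c i) ∧ c i ⊆ S}

/-- The projective line (or point) spanned by two points of `ℙ^n`. -/
def lineThrough (n : ℕ) (p q : Pn n) : Set (Pn n) :=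
  {x | Projectivization.submodule x ≤ Projectivization.submodule p ⊔ Projectivization.submodule q}

/-- A line in `ℙ^n`: the projectivization of a 2-dimensional linear subspace. -/
def IsLine (n : ℕ) (l : Set (Pn n)) : Prop :=
  ∃ W : Submodule ℂ (Fin (n + 1) → ℂ), Module.finrank ℂ W = 2 ∧
    l = {x | Projectivization.submodule x ≤ W}

/-- The linear span in `ℙ^n` of an effective divisor (a multiset of points). -/
def linSpan (n : ℕ) (D : Multiset (Pn n)) : Set (Pn n) :=
  {x | Projectivization.submodule x ≤
    Submodule.span ℂ (⋃ p ∈ {p : Pn n | p ∈ D}, (Projectivization.submodule p : Set (Fin (n + 1) → ℂ)))}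

/-- The `r`-th secant variety of a subset `C` of `ℙ^n`: the union of the linear spans of all
effective divisors of degree `r` supported on `C`. -/
def secantVariety (n : ℕ) (r : ℕ) (C : Set (Pn n)) : Set (Pn n) :=
  ⋃ D ∈ {D : Multiset (Pn n) | Multiset.card D = r ∧ ∀ p ∈ D, p ∈ C}, linSpan n D

end

/-!
Let `u` represent `p ∈ X` and let `v` lie in the affine cone over `S`. The restriction of `F` to
the affine line `t ↦ (1 - t) u + t v` is a polynomial of degree at most `d` in `t`. It vanishes at
`t = 0` because `p ∈ X` and at `t = 1` because `S ⊆ X`, so that the line lies in the zero locus of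
`F` as soon as it also vanishes at `t = 2, …, d`. These are `d - 1` polynomial conditions on `v`,
satisfied by `v = 0` since `F` vanishes on the line spanned by `u`. One more condition, the
vanishing of a coordinate of `v` which is nonzero at `u`, makes `v` independent of `u`. The cone
over `S` has dimension at least `d + 1`, so by Krull's height theorem these `d` conditions have a
common zero `v ≠ 0` in it.
-/

noncomputable section

open AffineMap (lineMap)

section LineRestriction

variable {σ R : Type*} [CommRing R]

/-- The restriction of a polynomial to the affine line through `z` and `w`, as a polynomial in the
parameter of the line which is `0` at `z` and `1` at `w`. -/
def lineRestriction (z w : σ → R) : MvPolynomial σ R →ₐ[R] Polynomial R :=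
  aeval fun i ↦ (1 - Polynomial.X) * Polynomial.C (z i) + Polynomial.X * Polynomial.C (w i)

theorem eval_lineRestriction (z w : σ → R) (f : MvPolynomial σ R) (t : R) :
    (lineRestriction z w f).eval t = eval (lineMap z w t) f := by
  suffices (Polynomial.aeval t).comp (lineRestriction z w) = aeval (lineMap z w t) by
    simpa [MvPolynomial.aeval_eq_eval] using DFunLike.congr_fun this f
  ext i
  simp [lineRestriction, AffineMap.lineMap_apply_module, mul_comm t]

theorem natDegree_lineRestriction_le (z w : σ → R) (f : MvPolynomial σ R) :
    (lineRestriction z w f).natDegree ≤ f.totalDegree :=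
  (aeval_natDegree_le (n := 1) f le_rfl _ fun i ↦ by compute_degree).trans_eq (mul_one _)

theorem eval_lineMap_eq_zero_of_totalDegree_lt_card [IsDomain R] {f : MvPolynomial σ R}
    {z w : σ → R} {T : Finset R} (hT : f.totalDegree < T.card)
    (h : ∀ t ∈ T, eval (lineMap z w t) f = 0) (t : R) : eval (lineMap z w t) f = 0 := by
  have hzero : lineRestriction z w f = 0 :=
    Polynomial.eq_zero_of_natDegree_lt_card_of_eval_eq_zero' _ T
      (fun t ht ↦ (eval_lineRestriction z w f t).trans (h t ht))
      ((natDegree_lineRestriction_le z w f).trans_lt hT)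
  rw [← eval_lineRestriction, hzero, Polynomial.eval_zero]

theorem eval_lineMap_eq_zero_of_infinite [IsDomain R] {f : MvPolynomial σ R} {z w : σ → R}
    {T : Set R} (hT : T.Infinite) (h : ∀ t ∈ T, eval (lineMap z w t) f = 0) (t : R) :
    eval (lineMap z w t) f = 0 := by
  obtain ⟨T', hT', hcard⟩ := hT.exists_subset_card_eq (f.totalDegree + 1)
  exact eval_lineMap_eq_zero_of_totalDegree_lt_card (by omega) (fun t ht ↦ h t (hT' ht)) t

theorem forall_eval_lineMap_eq_zero_or_of_mul [IsDomain R] [Infinite R] {f g : MvPolynomial σ R}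
    {z w : σ → R} (h : ∀ t : R, eval (lineMap z w t) (f * g) = 0) :
    (∀ t : R, eval (lineMap z w t) f = 0) ∨ ∀ t : R, eval (lineMap z w t) g = 0 := by
  have hmul : lineRestriction z w f * lineRestriction z w g = 0 :=
    Polynomial.funext fun t ↦ by rw [← map_mul, eval_lineRestriction, h, Polynomial.eval_zero]
  simp only [← eval_lineRestriction]
  exact (mul_eq_zero.1 hmul).imp (fun hf t ↦ by simp [hf]) (fun hg t ↦ by simp [hg])

/-- The polynomial `v ↦ f (lineMap u v t)`, that is, the composition of `f` with the homothety of
centre `u` and ratio `t`. -/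
def compHomothety (u : σ → R) (t : R) : MvPolynomial σ R →ₐ[R] MvPolynomial σ R :=
  aeval fun i ↦ C ((1 - t) * u i) + C t * X i

theorem eval_compHomothety (u v : σ → R) (t : R) (f : MvPolynomial σ R) :
    eval v (compHomothety u t f) = eval (lineMap u v t) f := by
  suffices (aeval v).comp (compHomothety u t) = aeval (lineMap u v t) by
    simpa [MvPolynomial.aeval_eq_eval] using DFunLike.congr_fun this f
  ext i
  simp [compHomothety, AffineMap.lineMap_apply_module]

end LineRestriction

section Homogeneous

variable {σ : Type*} {d : ℕ}

theorem eval_smul_of_isHomogeneous {R : Type*} [CommSemiring R] {F : MvPolynomial σ R}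
    (hF : F.IsHomogeneous d) (t : R) (v : σ → R) : eval (t • v) F = t ^ d * eval v F := by
  simp only [eval_eq, Finset.mul_sum]
  refine Finset.sum_congr rfl fun m hm ↦ ?_
  have hdeg : ∑ i ∈ m.support, m i = d := by
    rw [← Finsupp.degree_apply, Finsupp.degree_eq_weight_one]
    exact hF (mem_support_iff.1 hm)
  simp only [Pi.smul_apply, smul_eq_mul, mul_pow, Finset.prod_mul_distrib,
    Finset.prod_pow_eq_pow_sum, hdeg]
  ring

variable {K : Type*} [Field K] {F : MvPolynomial σ K} {z w : σ → K}

theorem eval_eq_zero_of_mem_span_pair [Infinite K] (hF : F.IsHomogeneous d)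
    (h : ∀ t : K, eval (lineMap z w t) F = 0) {x : σ → K} (hx : x ∈ Submodule.span K {z, w}) :
    eval x F = 0 := by
  obtain ⟨a, b, rfl⟩ := Submodule.mem_span_pair.1 hx
  have h_off : ∀ a b : K, a + b ≠ 0 → eval (a • z + b • w) F = 0 := fun a b hab ↦ by
    have hscale : a • z + b • w = (a + b) • lineMap z w (b / (a + b)) := by
      have ha : (a + b) * (1 - b / (a + b)) = a := by field_simp; ring
      rw [AffineMap.lineMap_apply_module, smul_add, smul_smul, smul_smul, ha,
        mul_div_cancel₀ b hab]
    rw [hscale, eval_smul_of_isHomogeneous hF, h, mul_zero]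
  -- Where `a + b = 0`, the line through the given point in direction `z` leaves that locus.
  have h_move : ∀ t ∈ ({-(a + b)}ᶜ : Set K),
      eval (lineMap (a • z + b • w) ((a + 1) • z + b • w) t) F = 0 := fun t ht ↦ by
    have hpt : lineMap (a • z + b • w) ((a + 1) • z + b • w) t = (a + t) • z + b • w := by
      rw [AffineMap.lineMap_apply_module]; module
    rw [hpt]
    exact h_off _ _ fun h0 ↦ ht (by rw [Set.mem_singleton_iff]; linear_combination h0)
  simpa using eval_lineMap_eq_zero_of_infinite (Set.finite_singleton _).infinite_compl h_move 0

theorem eval_eq_zero_of_mem_span_pair_of_forall_le [CharZero K] (hF : F.IsHomogeneous d)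
    (h : ∀ k ≤ d, eval (lineMap z w (k : K)) F = 0) {x : σ → K}
    (hx : x ∈ Submodule.span K {z, w}) : eval x F = 0 := by
  refine eval_eq_zero_of_mem_span_pair hF
    (eval_lineMap_eq_zero_of_totalDegree_lt_card
      (T := (Finset.range (d + 1)).map Nat.castEmbedding) ?_ ?_) hx
  · simpa [Nat.lt_succ_iff] using hF.totalDegree_le
  · simpa [Nat.lt_succ_iff] using h

end Homogeneous

section Krull

variable {R : Type*} [CommRing R] [IsNoetherianRing R]

theorem height_map_mk_le_card_of_mem_minimalPrimes {I m : Ideal R} {t : Finset R}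
    (hm : m ∈ (I ⊔ Ideal.span (t : Set R)).minimalPrimes) :
    (m.map (Ideal.Quotient.mk I)).height ≤ t.card := by
  classical
  set π := Ideal.Quotient.mk I
  have : m.IsPrime := hm.isPrime
  have hker : RingHom.ker π ≤ m := I.mk_ker.trans_le (le_sup_left.trans hm.le)
  have hmin : m.map π ∈
      (Ideal.span ((t.image π : Finset (R ⧸ I)) : Set (R ⧸ I))).minimalPrimes := by
    rw [Finset.coe_image, ← Ideal.map_span]
    refine ⟨⟨Ideal.map_isPrime_of_surjective Ideal.Quotient.mk_surjective hker,
      Ideal.map_mono (le_sup_right.trans hm.le)⟩, fun Q ⟨hQ, htQ⟩ hQm ↦ ?_⟩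
    refine Ideal.map_le_iff_le_comap.2 (hm.2 ⟨hQ.comap π, sup_le ?_ ?_⟩ ?_)
    · exact I.mk_ker.symm.trans_le (Ideal.ker_le_comap π)
    · exact Ideal.le_comap_of_map_le htQ
    · calc
        Q.comap π ≤ (m.map π).comap π := Ideal.comap_mono hQm
        _ = m := (m.comap_map_of_surjective' π Ideal.Quotient.mk_surjective).trans
          (sup_eq_left.2 hker)
  exact (Ideal.height_le_card_of_mem_minimalPrimes_span_finset hmin).trans
    (by exact_mod_cast Finset.card_image_le)

theorem length_le_card_of_last_mem_minimalPrimes (p : LTSeries (PrimeSpectrum R)) {t : Finset R}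
    (h : p.last.asIdeal ∈ (p.head.asIdeal ⊔ Ideal.span (t : Set R)).minimalPrimes) :
    p.length ≤ t.card := by
  let e := p.head.asIdeal.primeSpectrumQuotientOrderIsoZeroLocus
  let q : LTSeries (PrimeSpectrum (R ⧸ p.head.asIdeal)) :=
    LTSeries.mk p.length (fun i ↦ e.symm ⟨p i, LTSeries.head_le p i⟩)
      fun i j hij ↦ e.symm.strictMono (p.strictMono hij)
  have hq : (p.length : ℕ∞) ≤ q.last.asIdeal.height := by
    rw [PrimeSpectrum.height_eq_orderHeight]
    exact Order.length_le_height_last (p := q)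
  exact_mod_cast hq.trans (height_map_mk_le_card_of_mem_minimalPrimes h)

end Krull

section Nullstellensatz

variable {k K σ : Type*} [Field k] [Field K] [Algebra k K]

theorem vanishingIdeal_lt_vanishingIdeal {A B : Set (σ → K)} (hAB : A ⊂ B)
    (hA : zeroLocus K (vanishingIdeal k A) = A) : vanishingIdeal k B < vanishingIdeal k A := by
  refine lt_of_le_not_ge (vanishingIdeal_anti_mono hAB.subset) fun hle ↦ hAB.not_subset ?_
  exact (le_zeroLocus_iff_le_vanishingIdeal.2 hle).trans hA.le

theorem zeroLocus_vanishingIdeal_singleton (x : σ → K) :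
    zeroLocus K (vanishingIdeal K {x}) = {x} := by
  refine (zeroLocus_vanishingIdeal_le _).antisymm' fun y hy ↦ funext fun i ↦ ?_
  have hyi : eval y (X i - C (x i)) = 0 := hy _ (by simp)
  rwa [map_sub, eval_X, eval_C, sub_eq_zero] at hyi

theorem vanishingIdeal_singleton_mem_minimalPrimes [IsAlgClosed K] [Finite σ]
    {J : Ideal (MvPolynomial σ k)} {x : σ → K} (h : zeroLocus K J = {x}) :
    vanishingIdeal k {x} ∈ J.minimalPrimes := by
  refine ⟨⟨inferInstance, h ▸ le_vanishingIdeal_zeroLocus J⟩, fun Q ⟨hQ, hJQ⟩ _ ↦ ?_⟩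
  rw [← IsPrime.vanishingIdeal_zeroLocus (K := K) Q, ← h]
  exact vanishingIdeal_anti_mono (zeroLocus_anti_mono hJQ)

end Nullstellensatz

section AffineCone

section

variable {K V : Type*} [DivisionRing K] [AddCommGroup V] [Module K V]

/-- The affine cone over a set `c` of points of a projective space: the union of the corresponding
lines through the origin. It contains the origin unless `c` is empty. -/
def affineCone (c : Set (Projectivization K V)) : Set V :=
  ⋃ p ∈ c, (p.submodule : Set V)

variable {c c' : Set (Projectivization K V)}

theorem mem_affineCone {v : V} : v ∈ affineCone c ↔ ∃ p ∈ c, v ∈ p.submodule := by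
  simp [affineCone]

theorem mem_affineCone_iff_mk_mem {v : V} (hv : v ≠ 0) :
    v ∈ affineCone c ↔ Projectivization.mk K v hv ∈ c := by
  refine mem_affineCone.trans ⟨?_, fun h ↦ ⟨_, h, ?_⟩⟩
  · rintro ⟨p, hp, hvp⟩
    induction p using Projectivization.ind with | h w hw
    rw [Projectivization.submodule_mk, Submodule.mem_span_singleton] at hvp
    rwa [(Projectivization.mk_eq_mk_iff' K v w hv hw).2 hvp]
  · rw [Projectivization.submodule_mk]
    exact Submodule.mem_span_singleton_self v

theorem zero_mem_affineCone (hc : c.Nonempty) : (0 : V) ∈ affineCone c :=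
  mem_affineCone.2 ⟨_, hc.some_mem, zero_mem _⟩

theorem smul_mem_affineCone {v : V} (hv : v ∈ affineCone c) (t : K) : t • v ∈ affineCone c :=
  let ⟨p, hp, hvp⟩ := mem_affineCone.1 hv
  mem_affineCone.2 ⟨p, hp, p.submodule.smul_mem t hvp⟩

theorem affineCone_subset_affineCone : affineCone c ⊆ affineCone c' ↔ c ⊆ c' := by
  refine ⟨fun h p hp ↦ ?_, fun h ↦ Set.biUnion_subset_biUnion_left h⟩
  rw [← p.mk_rep] at hp ⊢
  rw [← mem_affineCone_iff_mk_mem] at hp ⊢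
  exact h hp

theorem affineCone_strictMono : StrictMono (affineCone : Set (Projectivization K V) → Set V) :=
  fun _ _ h ↦ ⟨affineCone_subset_affineCone.2 h.1, fun h' ↦ h.2 (affineCone_subset_affineCone.1 h')⟩

theorem singleton_zero_ssubset_affineCone (hc : c.Nonempty) : {(0 : V)} ⊂ affineCone c := by
  obtain ⟨p, hp⟩ := hc
  refine ⟨Set.singleton_subset_iff.2 (zero_mem_affineCone ⟨p, hp⟩), fun h ↦ p.rep_nonzero ?_⟩
  exact h ((mem_affineCone_iff_mk_mem p.rep_nonzero).2 (p.mk_rep.symm ▸ hp))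

end

variable {n : ℕ} {c : Set (Pn n)}

theorem mem_algZeroLocus_singleton {p : Pn n} {f : MvPolynomial (Fin (n + 1)) ℂ} :
    p ∈ algZeroLocus n {f} ↔ ∀ v ∈ p.submodule, eval v f = 0 := by
  simp [algZeroLocus]

theorem mk_mem_algZeroLocus_singleton {v : Fin (n + 1) → ℂ} {hv : v ≠ 0}
    {f : MvPolynomial (Fin (n + 1)) ℂ} :
    Projectivization.mk ℂ v hv ∈ algZeroLocus n {f} ↔ ∀ t : ℂ, eval (t • v) f = 0 := by
  simp [algZeroLocus, Submodule.mem_span_singleton]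

theorem subset_algZeroLocus_singleton {f : MvPolynomial (Fin (n + 1)) ℂ} :
    c ⊆ algZeroLocus n {f} ↔ f ∈ vanishingIdeal ℂ (affineCone c) := by
  simp only [mem_vanishingIdeal_iff, mem_affineCone, aeval_eq_eval]
  exact ⟨fun h v ⟨p, hp, hv⟩ ↦ h hp f rfl v hv, fun h p hp g hg v hv ↦ hg ▸ h v ⟨p, hp, hv⟩⟩

theorem zeroLocus_vanishingIdeal_affineCone (hc : IsAlgClosedSet n c) (hne : c.Nonempty) :
    zeroLocus ℂ (vanishingIdeal ℂ (affineCone c)) = affineCone c := by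
  refine (zeroLocus_vanishingIdeal_le _).antisymm' fun v hv ↦ ?_
  rcases eq_or_ne v 0 with rfl | hv0
  · exact zero_mem_affineCone hne
  obtain ⟨G, rfl⟩ := hc
  rw [mem_affineCone_iff_mk_mem hv0]
  intro g hg w hw
  rw [Projectivization.submodule_mk, Submodule.mem_span_singleton] at hw
  obtain ⟨t, rfl⟩ := hw
  have hmem : compHomothety 0 t g ∈ vanishingIdeal ℂ (affineCone (algZeroLocus n G)) := by
    intro x hx
    obtain ⟨p, hp, hxp⟩ := mem_affineCone.1 (smul_mem_affineCone hx t)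
    simpa [eval_compHomothety, AffineMap.lineMap_apply_module] using hp g hg _ hxp
  simpa [eval_compHomothety, AffineMap.lineMap_apply_module] using hv _ hmem

theorem isPrime_vanishingIdeal_affineCone (hc : IsIrrVariety n c) :
    (vanishingIdeal ℂ (affineCone c)).IsPrime := by
  obtain ⟨hne, hirr⟩ := hc
  refine ⟨fun htop ↦ ?_, fun {f g} hfg ↦ ?_⟩
  · simpa using (Ideal.eq_top_iff_one _).1 htop 0 (zero_mem_affineCone hne)
  rw [← subset_algZeroLocus_singleton, ← subset_algZeroLocus_singleton]
  refine hirr _ _ ⟨_, rfl⟩ ⟨_, rfl⟩ fun p hp ↦ ?_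
  have hline := subset_algZeroLocus_singleton.2 hfg hp
  induction p using Projectivization.ind with | h v hv
  simp only [Set.mem_union, mk_mem_algZeroLocus_singleton] at hline ⊢
  have hmul : ∀ t : ℂ, eval (lineMap 0 v t) (f * g) = 0 := by
    simpa only [AffineMap.lineMap_apply_module, smul_zero, zero_add] using hline
  simpa only [AffineMap.lineMap_apply_module, smul_zero, zero_add] using
    forall_eval_lineMap_eq_zero_or_of_mul hmul

end AffineCone

section Dimension

variable {n : ℕ} {S : Set (Pn n)}

theorem exists_strictMono_of_lt_algDim {m : ℕ} (h : (m : ℕ∞) < algDim n S) :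
    ∃ k > m, ∃ c : Fin (k + 1) → Set (Pn n), StrictMono c ∧
      ∀ i, IsAlgClosedSet n (c i) ∧ IsIrrVariety n (c i) ∧ c i ⊆ S := by
  obtain ⟨_, ⟨k, rfl, hk⟩, hmk⟩ := lt_sSup_iff.1 h
  exact ⟨k, by exact_mod_cast hmk, hk⟩

theorem exists_ltSeries_vanishingIdeal_affineCone {k : ℕ} {c : Fin (k + 1) → Set (Pn n)}
    (hmono : StrictMono c) (hc : ∀ i, IsAlgClosedSet n (c i) ∧ IsIrrVariety n (c i)) :
    ∃ p : LTSeries (PrimeSpectrum (MvPolynomial (Fin (n + 1)) ℂ)), p.length = k + 1 ∧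
      p.head.asIdeal = vanishingIdeal ℂ (affineCone (c (Fin.last k))) ∧
      p.last.asIdeal = vanishingIdeal ℂ {(0 : Fin (n + 1) → ℂ)} := by
  let q : LTSeries (PrimeSpectrum (MvPolynomial (Fin (n + 1)) ℂ)) :=
    LTSeries.mk k
      (fun i ↦ ⟨vanishingIdeal ℂ (affineCone (c i.rev)),
        isPrime_vanishingIdeal_affineCone (hc _).2⟩)
      fun i j hij ↦ vanishingIdeal_lt_vanishingIdeal
        (affineCone_strictMono (hmono (Fin.rev_lt_rev.2 hij)))
        (zeroLocus_vanishingIdeal_affineCone (hc _).1 (hc _).2.1)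
  have hlast : q.last < pointToPoint 0 :=
    vanishingIdeal_lt_vanishingIdeal (singleton_zero_ssubset_affineCone (hc _).2.1)
      (zeroLocus_vanishingIdeal_singleton 0)
  refine ⟨q.snoc (pointToPoint 0) hlast, rfl, ?_, ?_⟩
  · rw [RelSeries.head_snoc]
    change vanishingIdeal ℂ (affineCone (c (Fin.rev 0))) = _
    rw [Fin.rev_zero]
  · rw [RelSeries.last_snoc]
    rfl

theorem exists_mem_affineCone_forall_eval_eq_zero
    {G : Finset (MvPolynomial (Fin (n + 1)) ℂ)} (hG : G.Nonempty) (hG0 : ∀ g ∈ G, eval 0 g = 0)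
    (hdim : (G.card : ℕ∞) ≤ algDim n S) :
    ∃ v ∈ affineCone S, v ≠ 0 ∧ ∀ g ∈ G, eval v g = 0 := by
  -- Otherwise `G` cuts the cone over the top of a chain in `S` down to the origin, whose height
  -- over that cone is then at most `#G`, although the chain of cones, with the origin added, has
  -- `k + 1 > #G` steps.
  by_contra! hno
  have hlt : ((G.card - 1 : ℕ) : ℕ∞) < algDim n S :=
    lt_of_lt_of_le (by exact_mod_cast Nat.sub_one_lt hG.card_ne_zero) hdim
  obtain ⟨k, hk, c, hmono, hc⟩ := exists_strictMono_of_lt_algDim hlt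
  obtain ⟨p, hlen, hhead, hlast⟩ :=
    exists_ltSeries_vanishingIdeal_affineCone hmono fun i ↦ ⟨(hc i).1, (hc i).2.1⟩
  set I := vanishingIdeal ℂ (affineCone (c (Fin.last k)))
  have hI : zeroLocus ℂ I = affineCone (c (Fin.last k)) :=
    zeroLocus_vanishingIdeal_affineCone (hc _).1 (hc _).2.1.1
  have hlocus : zeroLocus ℂ (I ⊔ Ideal.span (G : Set (MvPolynomial (Fin (n + 1)) ℂ))) = {0} := by
    refine Set.Subset.antisymm (fun v hv ↦ by_contra fun hv0 ↦ ?_) ?_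
    · have hvc : v ∈ affineCone (c (Fin.last k)) := hI.le (zeroLocus_anti_mono le_sup_left hv)
      obtain ⟨g, hg, hgv⟩ := hno v (affineCone_subset_affineCone.2 (hc _).2.2 hvc) hv0
      exact hgv (hv g (Ideal.mem_sup_right (Ideal.subset_span hg)))
    · refine le_zeroLocus_iff_le_vanishingIdeal.2 (sup_le
        (vanishingIdeal_anti_mono (singleton_zero_ssubset_affineCone (hc _).2.1.1).subset)
        (Ideal.span_le.2 fun g hg ↦ ?_))
      simpa using hG0 g hg
  have hmin := vanishingIdeal_singleton_mem_minimalPrimes hlocus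
  rw [← hhead, ← hlast] at hmin
  have := length_le_card_of_last_mem_minimalPrimes p hmin
  omega

end Dimension

section Lines

variable {n d : ℕ} {F : MvPolynomial (Fin (n + 1)) ℂ}

theorem lineThrough_mk_subset_algZeroLocus_singleton {v w : Fin (n + 1) → ℂ} {hv : v ≠ 0}
    {hw : w ≠ 0} (h : ∀ x ∈ Submodule.span ℂ {v, w}, eval x F = 0) :
    lineThrough n (Projectivization.mk ℂ v hv) (Projectivization.mk ℂ w hw) ⊆
      algZeroLocus n {F} := by
  intro p hp
  rw [mem_algZeroLocus_singleton]
  intro x hx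
  refine h x ?_
  rw [Submodule.span_insert]
  simpa using hp hx

theorem isAlgClosedSet_empty : IsAlgClosedSet n ∅ :=
  ⟨{1}, by
    ext p
    simpa [algZeroLocus] using ⟨0, p.submodule.zero_mem⟩⟩

theorem exists_mem_affineCone_notMem_span_forall_eval_lineMap_eq_zero (hd : 1 ≤ d)
    {S : Set (Pn n)} (hS : (d : ℕ∞) ≤ algDim n S) {u : Fin (n + 1) → ℂ} (hu : u ≠ 0)
    (hF : ∀ t : ℂ, eval (t • u) F = 0) :
    ∃ v ∈ affineCone S, v ∉ Submodule.span ℂ {u} ∧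
      ∀ k ∈ Finset.Icc 2 d, eval (lineMap u v (k : ℂ)) F = 0 := by
  classical
  obtain ⟨j, hj⟩ := Function.ne_iff.1 hu
  set H := (Finset.Icc 2 d).image fun k : ℕ ↦ compHomothety u (k : ℂ) F
  have hcard : (insert (X j) H).card ≤ d := calc
    (insert (X j) H).card ≤ (Finset.Icc 2 d).card + 1 :=
      (Finset.card_insert_le _ _).trans (by gcongr; exact Finset.card_image_le)
    _ = d := by rw [Nat.card_Icc]; omega
  have hzero : ∀ g ∈ insert (X j) H, eval 0 g = 0 := by
    simp only [H, Finset.forall_mem_insert, Finset.forall_mem_image, eval_compHomothety,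
      AffineMap.lineMap_apply_module, smul_zero, add_zero, hF, eval_X, Pi.zero_apply, implies_true,
      and_self]
  obtain ⟨v, hvS, hv0, hv⟩ := exists_mem_affineCone_forall_eval_eq_zero
    (Finset.insert_nonempty _ _) hzero (le_trans (by exact_mod_cast hcard) hS)
  simp only [H, Finset.forall_mem_insert, Finset.forall_mem_image, eval_compHomothety,
    eval_X] at hv
  refine ⟨v, hvS, fun hvu ↦ hv0 ?_, hv.2⟩
  obtain ⟨a, rfl⟩ := Submodule.mem_span_singleton.1 hvu
  rw [(mul_eq_zero.1 hv.1).resolve_right hj, zero_smul]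

end Lines

end

theorem stmt9_general {n d : ℕ} (hd : 1 ≤ d) {F : MvPolynomial (Fin (n + 1)) ℂ}
    (hF : F.IsHomogeneous d) {S : Set (Pn n)} (hS : S ⊆ algZeroLocus n {F})
    (hSdim : (d : ℕ∞) ≤ algDim n S) {p : Pn n} (hp : p ∈ algZeroLocus n {F}) :
    ∃ z ∈ S, z ≠ p ∧ lineThrough n z p ⊆ algZeroLocus n {F} := by
  induction p using Projectivization.ind with | h u hu
  rw [mk_mem_algZeroLocus_singleton] at hp
  obtain ⟨v, hvS, hvu, hv⟩ :=
    exists_mem_affineCone_notMem_span_forall_eval_lineMap_eq_zero hd hSdim hu hp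
  have hv0 : v ≠ 0 := fun h ↦ hvu (h ▸ zero_mem _)
  have hvF : eval v F = 0 := subset_algZeroLocus_singleton.1 hS v hvS
  refine ⟨Projectivization.mk ℂ v hv0, (mem_affineCone_iff_mk_mem hv0).1 hvS, fun hvu' ↦ ?_,
    lineThrough_mk_subset_algZeroLocus_singleton fun x hx ↦ ?_⟩
  · exact hvu (Submodule.mem_span_singleton.2
      ((Projectivization.mk_eq_mk_iff' ℂ v u hv0 hu).1 hvu'))
  · rw [Set.pair_comm] at hx
    refine eval_eq_zero_of_mem_span_pair_of_forall_le hF (fun k hk ↦ ?_) hx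
    match k with
    | 0 => simpa using hp 1
    | 1 => simpa using hvF
    | k + 2 => exact hv (k + 2) (by simp only [Finset.mem_Icc]; omega)
/-- Let `X ⊂ ℙ^n` be an irreducible hypersurface of degree `d` over `ℂ` and `S ⊆ X` an
irreducible closed subvariety with `dim S ≥ d`. Then through a general point `p` of `X`
(all points outside a closed subset not containing `X`) there passes a line contained in `X`
meeting `S` at a point `z ≠ p`. -/
theorem stmt9 (n d : ℕ) (hd : 1 ≤ d) (F : MvPolynomial (Fin (n + 1)) ℂ)
    (hF : F.IsHomogeneous d) (hF0 : F ≠ 0)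
    (X : Set (Pn n)) (hX : X = algZeroLocus n {F}) (hXirr : IsIrrVariety n X)
    (S : Set (Pn n)) (hS : S ⊆ X) (hScl : IsAlgClosedSet n S) (hSirr : IsIrrVariety n S)
    (hSdim : (d : ℕ∞) ≤ algDim n S) :
    ∃ Z : Set (Pn n), IsAlgClosedSet n Z ∧ ¬ X ⊆ Z ∧
      ∀ p ∈ X \ Z, ∃ z ∈ S, z ≠ p ∧ lineThrough n z p ⊆ X := by
  subst hX
  exact ⟨∅, isAlgClosedSet_empty, hXirr.1.not_subset_empty,
    fun p hp ↦ stmt9_general hd hF hS hSdim hp.1⟩
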